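/- arXiv:2501.05635 — 3 statements merged into one kernel-verified Lean document; each statement's English description precedes it below -/
import Mathlib

section
/- Let Y, X be random variables on a probability space (Ω, μ) taking values in finite nonempty types (with the discrete σ-algebra, all maps measurable). Then the Bayes error satisfies 1 − ∑_x max_y μ(X = x ∧ Y = y) ≤ (1/2) · H₂[Y | X], where H₂ denotes conditional Shannon entropy with logarithm base 2. -/
open MeasureTheory

/-- Base-2 Shannon entropy of a random variable `X` with values in a finite type,
with the convention `0 * log 0 = 0` (which holds since `Real.logb 2 0 = 0`). -/
noncomputable def ent2 {Ω α : Type*} [MeasurableSpace Ω] [Fintype α]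
    (μ : Measure Ω) (X : Ω → α) : ℝ :=
  -∑ x : α, (μ (X ⁻¹' {x})).toReal * Real.logb 2 (μ (X ⁻¹' {x})).toReal

/-- Base-2 conditional entropy `H₂[Y | X] = H₂[⟨Y,X⟩] - H₂[X]`. -/
noncomputable def condEnt2 {Ω α β : Type*} [MeasurableSpace Ω] [Fintype α] [Fintype β]
    (μ : Measure Ω) (Y : Ω → α) (X : Ω → β) : ℝ :=
  ent2 μ (fun ω => (Y ω, X ω)) - ent2 μ X

lemma hr_norm {γ : Type*} [Fintype γ] (q : γ → ℝ) (h0 : ∀ y, 0 ≤ q y)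
    (h1 : ∑ y, q y = 1) (y0 : γ) (hm : ∀ y, q y ≤ q y0) :
    2 * (1 - q y0) * Real.log 2 ≤ ∑ y, Real.negMulLog (q y) := by
  classical
  have key : ∀ c : ℝ, ∀ y, q y ≤ c → q y * (-Real.log c) ≤ Real.negMulLog (q y) := by
    intro c y hc
    rcases (h0 y).eq_or_lt with h | h
    · simp [← h]
    · have := Real.log_le_log h hc
      unfold Real.negMulLog
      nlinarith
  have hpos : 0 < q y0 := by
    by_contra h
    have : ∑ y, q y ≤ ∑ y : γ, (0 : ℝ) :=
      Finset.sum_le_sum fun y _ => (hm y).trans (not_lt.1 h)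
    simp [h1] at this
    linarith
  have hsplit : q y0 + ∑ y ∈ Finset.univ.erase y0, q y = 1 := by
    rw [Finset.add_sum_erase _ _ (Finset.mem_univ y0), h1]
  have hle1 : q y0 ≤ 1 := by
    have := Finset.sum_nonneg (s := Finset.univ.erase y0) (f := q) (fun y _ => h0 y)
    linarith
  rcases le_total (q y0) (1 / 2) with hM | hM
  · have e1 : ∑ y, q y * (-Real.log (q y0)) ≤ ∑ y, Real.negMulLog (q y) :=
      Finset.sum_le_sum fun y _ => key _ y (hm y)
    rw [← Finset.sum_mul, h1, one_mul] at e1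
    have e2 := Real.log_le_sub_one_of_pos (show 0 < 2 * q y0 by linarith)
    rw [Real.log_mul (by norm_num) hpos.ne'] at e2
    have e3 : Real.log 2 ≤ 1 := by
      have := Real.log_two_lt_d9
      linarith
    nlinarith
  · have e1 : ∑ y ∈ Finset.univ.erase y0, q y * (-Real.log (1 - q y0))
        ≤ ∑ y ∈ Finset.univ.erase y0, Real.negMulLog (q y) := by
      refine Finset.sum_le_sum fun y hy => key _ y ?_
      have := Finset.single_le_sum (f := q) (fun y _ => h0 y) hy
      linarith
    rw [← Finset.sum_mul] at e1
    have e2 : ∑ y ∈ Finset.univ.erase y0, q y = 1 - q y0 := by linarith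
    rw [e2] at e1
    rw [← Finset.add_sum_erase _ _ (Finset.mem_univ y0)]
    have e3 := Real.strictConcave_binEntropy.concaveOn.2 (x := 2⁻¹) (y := 1)
      (by norm_num) (by norm_num) (show 0 ≤ 2 * (1 - q y0) by linarith)
      (show 0 ≤ 2 * q y0 - 1 by linarith) (by ring)
    simp only [smul_eq_mul, Real.binEntropy_two_inv, Real.binEntropy_one] at e3
    rw [show 2 * (1 - q y0) * 2⁻¹ + (2 * q y0 - 1) * 1 = q y0 by ring,
      Real.binEntropy_eq_negMulLog_add_negMulLog_one_sub] at e3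
    have e4 : Real.negMulLog (1 - q y0) = (1 - q y0) * (-Real.log (1 - q y0)) := by
      unfold Real.negMulLog
      ring
    linarith

lemma hr_scaled {γ : Type*} [Fintype γ] [Nonempty γ] (p : γ → ℝ) (h0 : ∀ y, 0 ≤ p y)
    (s : ℝ) (hs : ∑ y, p y = s) :
    2 * (s - ⨆ y, p y) * Real.log 2 ≤ ∑ y, Real.negMulLog (p y) - Real.negMulLog s := by
  obtain ⟨y0, hy0⟩ := exists_eq_ciSup_of_finite (f := p)
  have hm : ∀ y, p y ≤ p y0 := fun y => hy0 ▸ le_ciSup (Set.finite_range p).bddAbove y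
  rw [← hy0]
  have hs0 : 0 ≤ s := hs ▸ Finset.sum_nonneg fun y _ => h0 y
  rcases hs0.eq_or_lt with h | h
  · have hz : ∀ y, p y = 0 := by
      intro y
      rw [← h] at hs
      exact (Finset.sum_eq_zero_iff_of_nonneg (fun y _ => h0 y)).1 hs y (Finset.mem_univ y)
    simp [hz, ← h]
  · have hq1 : ∑ y, p y / s = 1 := by
      rw [← Finset.sum_div, hs, div_self h.ne']
    have := hr_norm (fun y => p y / s) (fun y => div_nonneg (h0 y) h.le) hq1 y0
      (fun y => div_le_div_of_nonneg_right (hm y) h.le)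
    have e : ∀ y, Real.negMulLog (p y)
        = p y / s * Real.negMulLog s + s * Real.negMulLog (p y / s) := by
      intro y
      rw [← Real.negMulLog_mul, mul_div_cancel₀ _ h.ne']
    simp_rw [e]
    rw [Finset.sum_add_distrib, ← Finset.sum_mul, ← Finset.mul_sum, hq1]
    have e5 := mul_le_mul_of_nonneg_left this h.le
    have e6 : s * (2 * (1 - p y0 / s) * Real.log 2) = 2 * (s - p y0) * Real.log 2 := by
      field_simp
    linarith

lemma ent2_eq {Ω α : Type*} [MeasurableSpace Ω] [Fintype α] (μ : Measure Ω) (X : Ω → α) :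
    ent2 μ X = (∑ x, Real.negMulLog (μ (X ⁻¹' {x})).toReal) / Real.log 2 := by
  unfold ent2 Real.negMulLog Real.logb
  rw [← Finset.sum_neg_distrib, Finset.sum_div]
  exact Finset.sum_congr rfl fun x _ => by ring

lemma sum_fiber {Ω γ : Type*} [MeasurableSpace Ω]
    [Fintype γ] [MeasurableSpace γ] [DiscreteMeasurableSpace γ]
    (μ : Measure Ω) [IsProbabilityMeasure μ] (Y : Ω → γ) (hY : Measurable Y)
    (A : Set Ω) :
    ∑ y, (μ (A ∩ Y ⁻¹' {y})).toReal = (μ A).toReal := by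
  classical
  have := sum_measureReal_preimage_singleton (μ := μ.restrict A) (f := Y) Finset.univ
    (fun y _ => hY (MeasurableSet.of_discrete))
  simp only [Measure.real, Finset.coe_univ, Set.preimage_univ, Measure.restrict_apply_univ] at this
  rw [← this]
  refine Finset.sum_congr rfl fun y _ => ?_
  rw [Measure.restrict_apply (hY MeasurableSet.of_discrete), Set.inter_comm]

/-- Hellman–Raviv inequality: the Bayes error of predicting `Y` from `X` is at most
half the base-2 conditional entropy `H₂[Y | X]`. -/
theorem bayesError_le_half_condEnt2 {Ω α γ : Type*} [MeasurableSpace Ω]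
    [Fintype α] [Nonempty α] [MeasurableSpace α] [DiscreteMeasurableSpace α]
    [Fintype γ] [Nonempty γ] [MeasurableSpace γ] [DiscreteMeasurableSpace γ]
    (μ : Measure Ω) [IsProbabilityMeasure μ]
    (Y : Ω → γ) (X : Ω → α)
    (hY : Measurable Y) (hX : Measurable X) :
    1 - ∑ x : α, ⨆ y : γ, (μ (X ⁻¹' {x} ∩ Y ⁻¹' {y})).toReal
      ≤ (1 / 2) * condEnt2 μ Y X := by
  have hl : 0 < Real.log 2 := Real.log_pos (by norm_num)
  have hsum : ∑ x, (μ (X ⁻¹' {x})).toReal = 1 := by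
    have := sum_fiber μ X hX Set.univ
    simpa using this
  have h := Finset.sum_le_sum fun x (_ : x ∈ Finset.univ) =>
    hr_scaled (fun y => (μ (X ⁻¹' {x} ∩ Y ⁻¹' {y})).toReal) (fun y => ENNReal.toReal_nonneg)
      _ (sum_fiber μ Y hY (X ⁻¹' {x}))
  rw [← Finset.sum_mul, ← Finset.mul_sum, Finset.sum_sub_distrib, Finset.sum_sub_distrib,
    hsum] at h
  have hj : ∑ z : γ × α, Real.negMulLog (μ ((fun ω => (Y ω, X ω)) ⁻¹' {z})).toReal
      = ∑ x, ∑ y, Real.negMulLog (μ (X ⁻¹' {x} ∩ Y ⁻¹' {y})).toReal := by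
    rw [Fintype.sum_prod_type_right]
    refine Finset.sum_congr rfl fun x _ => Finset.sum_congr rfl fun y _ => ?_
    congr 3
    ext ω
    simp [and_comm]
  unfold condEnt2
  rw [ent2_eq, ent2_eq, hj, ← sub_div, ← mul_div_assoc, le_div_iff₀ hl]
  linarith
end

section
/- Let Y, H, S be random variables on a probability space (Ω, μ) taking values in finite nonempty types (with the discrete σ-algebra, all maps measurable). Then the Bayes error of predicting Y from the pair satisfies 1 − ∑_{(h,s)} max_y μ(H = h ∧ S = s ∧ Y = y) ≤ (1/2) · min (H₂[Y | H]) (H₂[Y | S]), where H₂ denotes conditional Shannon entropy with logarithm base 2. -/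
open MeasureTheory

lemma aux_neg_log {m : ℝ} (h0 : 0 < m) (h1 : m ≤ 1/2) :
    2 * (1 - m) * Real.log 2 ≤ -Real.log m := by
  -- concavity of log: 1/2 lies between m and 1
  have hc := strictConcaveOn_log_Ioi.concaveOn
  have hd : 0 < 1 - m := by linarith
  have h := hc.2 (show m ∈ Set.Ioi (0:ℝ) from h0) (show (1:ℝ) ∈ Set.Ioi (0:ℝ) by norm_num)
    (show 0 ≤ (1/2) / (1 - m) by positivity)
    (show 0 ≤ (1/2 - m) / (1 - m) from div_nonneg (by linarith) hd.le)
    (by field_simp; ring)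
  simp only [smul_eq_mul, Real.log_one, mul_zero, add_zero, mul_one] at h
  have e : (1/2) / (1 - m) * m + (1/2 - m) / (1 - m) = 1/2 := by field_simp; ring
  rw [e] at h
  have e2 : Real.log (1/2) = - Real.log 2 := by rw [one_div, Real.log_inv]
  rw [e2, div_mul_eq_mul_div, div_le_iff₀ hd] at h
  linarith

lemma aux_bin {m : ℝ} (h0 : 1/2 ≤ m) (h1 : m ≤ 1) :
    2 * (1 - m) * Real.log 2 ≤ Real.binEntropy m := by
  have h := Real.strictConcave_binEntropy.concaveOn.2
    (show (2⁻¹:ℝ) ∈ Set.Icc (0:ℝ) 1 by norm_num) (show (1:ℝ) ∈ Set.Icc (0:ℝ) 1 by norm_num)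
    (show 0 ≤ 2 * (1 - m) by linarith) (show 0 ≤ 2 * m - 1 by linarith) (by ring)
  simp only [smul_eq_mul, Real.binEntropy_two_inv, Real.binEntropy_one, mul_zero, add_zero,
    mul_one] at h
  have e : 2 * (1 - m) * 2⁻¹ + (2 * m - 1) = m := by ring
  rwa [e] at h

lemma aux_prob {γ : Type*} [Fintype γ] (p : γ → ℝ) (hp : ∀ y, 0 ≤ p y)
    (hs : ∑ y, p y = 1) (y₀ : γ) (hy : ∀ y, p y ≤ p y₀) :
    2 * (1 - p y₀) * Real.log 2 ≤ -∑ y, p y * Real.log (p y) := by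
  classical
  have hmul : ∀ (y : γ) (c : ℝ), p y ≤ c → p y * Real.log (p y) ≤ p y * Real.log c := by
    intro y c hc
    rcases (hp y).eq_or_lt with h | h
    · simp [← h]
    · exact mul_le_mul_of_nonneg_left (Real.log_le_log h hc) h.le
  have hm0 : 0 < p y₀ := by
    by_contra hn
    have : ∑ y, p y ≤ 0 := Finset.sum_nonpos (fun y _ => (hy y).trans (not_lt.mp hn))
    linarith
  rcases le_total (p y₀) (1/2) with hm | hm
  · refine (aux_neg_log hm0 hm).trans (neg_le_neg ?_)
    calc _ ≤ ∑ y, p y * Real.log (p y₀) := Finset.sum_le_sum (fun y _ => hmul y _ (hy y))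
      _ = _ := by rw [← Finset.sum_mul, hs, one_mul]
  · have hsplit := Finset.add_sum_erase Finset.univ p (Finset.mem_univ y₀)
    have h1 : p y₀ ≤ 1 := by
      rw [← hs]; exact Finset.single_le_sum (fun y _ => hp y) (Finset.mem_univ y₀)
    refine (aux_bin hm h1).trans ?_
    rw [← Finset.add_sum_erase Finset.univ (fun y => p y * Real.log (p y)) (Finset.mem_univ y₀)]
    have : ∑ y ∈ Finset.univ.erase y₀, p y * Real.log (p y)
        ≤ (1 - p y₀) * Real.log (1 - p y₀) := by
      have e : 1 - p y₀ = ∑ y ∈ Finset.univ.erase y₀, p y := by linarith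
      calc _ ≤ ∑ y ∈ Finset.univ.erase y₀, p y * Real.log (1 - p y₀) := by
            refine Finset.sum_le_sum (fun y hy' => hmul y _ ?_)
            rw [e]; exact Finset.single_le_sum (fun y _ => hp y) hy'
        _ = _ := by rw [← Finset.sum_mul, ← e]
    rw [Real.binEntropy_eq_negMulLog_add_negMulLog_one_sub]
    simp only [Real.negMulLog]
    linarith

lemma aux_hom {γ : Type*} [Fintype γ] [Nonempty γ] (q : γ → ℝ) (hq : ∀ y, 0 ≤ q y) :
    2 * (∑ y, q y - ⨆ y, q y) ≤
      (∑ y, q y) * Real.logb 2 (∑ y, q y) - ∑ y, q y * Real.logb 2 (q y) := by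
  obtain ⟨y₀, hy₀⟩ := Finite.exists_max q
  have hsup : ⨆ y, q y = q y₀ :=
    le_antisymm (ciSup_le hy₀) (le_ciSup (Set.finite_range q).bddAbove y₀)
  rw [hsup]
  have hP0 : 0 ≤ ∑ y, q y := Finset.sum_nonneg (fun y _ => hq y)
  rcases hP0.eq_or_lt with h | h
  · have hz : ∀ y, q y = 0 := fun y =>
      (Finset.sum_eq_zero_iff_of_nonneg (fun y _ => hq y)).1 h.symm y (Finset.mem_univ y)
    simp [hz]
  · set P := ∑ y, q y with hP
    have hl : 0 < Real.log 2 := Real.log_pos (by norm_num)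
    have key := aux_prob (fun y => q y / P) (fun y => div_nonneg (hq y) hP0)
      (by rw [← Finset.sum_div, ← hP, div_self h.ne']) y₀ (fun y => by gcongr; exact hy₀ y)
    have e : ∑ y, q y / P * Real.log (q y / P)
        = (∑ y, q y * Real.log (q y)) / P - Real.log P := by
      have : ∀ y, q y / P * Real.log (q y / P) = q y * Real.log (q y) / P
          - q y * (Real.log P / P) := by
        intro y
        rcases (hq y).eq_or_lt with h' | h'
        · simp [← h']
        · rw [Real.log_div h'.ne' h.ne']; ring
      simp only [this, Finset.sum_sub_distrib, ← Finset.sum_div, ← Finset.sum_mul, ← hP]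
      field_simp
    rw [e] at key
    have key2 := mul_le_mul_of_nonneg_left key h.le
    have e1 : P * (2 * (1 - q y₀ / P) * Real.log 2) = 2 * (P - q y₀) * Real.log 2 := by
      field_simp
    have e2 : P * -((∑ y, q y * Real.log (q y)) / P - Real.log P)
        = P * Real.log P - ∑ y, q y * Real.log (q y) := by
      field_simp; ring
    rw [e1, e2] at key2
    have e3 : P * Real.logb 2 P - ∑ y, q y * Real.logb 2 (q y)
        = (P * Real.log P - ∑ y, q y * Real.log (q y)) / Real.log 2 := by
      simp only [Real.logb, ← mul_div_assoc, ← Finset.sum_div, sub_div]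
    rw [e3, le_div_iff₀ hl]
    exact key2

lemma aux_sum {Ω β : Type*} [MeasurableSpace Ω] [Fintype β] [MeasurableSpace β]
    [DiscreteMeasurableSpace β] (μ : Measure Ω) [IsProbabilityMeasure μ] (S : Ω → β)
    (hS : Measurable S) (A : Set Ω) :
    ∑ b, (μ (A ∩ S ⁻¹' {b})).toReal = (μ A).toReal := by
  have hm : ∀ b, MeasurableSet (S ⁻¹' {b}) := fun b => hS (MeasurableSet.of_discrete)
  have h := sum_measure_preimage_singleton (μ := μ.restrict A) (f := S) Finset.univ
    (fun b _ => hm b)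
  rw [← ENNReal.toReal_sum (fun b _ => measure_ne_top _ _)]
  simp only [Measure.restrict_apply (hm _), Finset.coe_univ, Set.preimage_univ,
    Measure.restrict_apply_univ] at h
  rw [← h]
  simp only [Set.inter_comm]

lemma aux_single {Ω α γ : Type*} [MeasurableSpace Ω]
    [Fintype α] [MeasurableSpace α] [DiscreteMeasurableSpace α]
    [Fintype γ] [Nonempty γ] [MeasurableSpace γ] [DiscreteMeasurableSpace γ]
    (μ : Measure Ω) [IsProbabilityMeasure μ] (Y : Ω → γ) (H : Ω → α)
    (hY : Measurable Y) (hH : Measurable H) :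
    1 - ∑ a, ⨆ y : γ, (μ (H ⁻¹' {a} ∩ Y ⁻¹' {y})).toReal ≤ (1 / 2) * condEnt2 μ Y H := by
  have h1 : ∑ a, (μ (H ⁻¹' {a})).toReal = 1 := by
    simpa using aux_sum μ H hH Set.univ
  have h2 := Finset.sum_le_sum (s := Finset.univ) (fun (a : α) _ =>
    aux_hom (fun y : γ => (μ (H ⁻¹' {a} ∩ Y ⁻¹' {y})).toReal) (fun y => ENNReal.toReal_nonneg))
  simp only [aux_sum μ Y hY, ← Finset.mul_sum, Finset.sum_sub_distrib, h1] at h2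
  have hset : ∀ (y : γ) (a : α), (fun ω => (Y ω, H ω)) ⁻¹' {(y, a)}
      = H ⁻¹' {a} ∩ Y ⁻¹' {y} := by
    intro y a; ext ω; simp [and_comm]
  have e : condEnt2 μ Y H = ∑ a, (μ (H ⁻¹' {a})).toReal * Real.logb 2 (μ (H ⁻¹' {a})).toReal
      - ∑ a, ∑ y, (μ (H ⁻¹' {a} ∩ Y ⁻¹' {y})).toReal *
        Real.logb 2 (μ (H ⁻¹' {a} ∩ Y ⁻¹' {y})).toReal := by
    unfold condEnt2 ent2
    rw [Fintype.sum_prod_type_right]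
    simp only [hset]
    ring
  rw [e]
  linarith

lemma aux_pair {Ω α β γ : Type*} [MeasurableSpace Ω] [Fintype α]
    [Fintype β] [MeasurableSpace β] [DiscreteMeasurableSpace β]
    [Fintype γ] [Nonempty γ]
    (μ : Measure Ω) [IsProbabilityMeasure μ] (Y : Ω → γ) (H : Ω → α) (S : Ω → β)
    (hS : Measurable S) :
    ∑ a, ⨆ y : γ, (μ (H ⁻¹' {a} ∩ Y ⁻¹' {y})).toReal ≤
      ∑ a, ∑ b, ⨆ y : γ, (μ (H ⁻¹' {a} ∩ S ⁻¹' {b} ∩ Y ⁻¹' {y})).toReal := by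
  refine Finset.sum_le_sum (fun a _ => ciSup_le (fun y => ?_))
  rw [← aux_sum μ S hS]
  refine Finset.sum_le_sum (fun b _ => ?_)
  rw [Set.inter_right_comm]
  exact le_ciSup (f := fun y => (μ (H ⁻¹' {a} ∩ S ⁻¹' {b} ∩ Y ⁻¹' {y})).toReal)
    (Set.finite_range _).bddAbove y

/-- Corollary 1: the Bayes error of predicting `Y` from the pair `⟨H,S⟩` is at most half
the minimum of the base-2 conditional entropies `H₂[Y | H]` and `H₂[Y | S]`. -/
theorem bayesError_pair_le_half_min_condEnt2 {Ω α β γ : Type*} [MeasurableSpace Ω]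
    [Fintype α] [Nonempty α] [MeasurableSpace α] [DiscreteMeasurableSpace α]
    [Fintype β] [Nonempty β] [MeasurableSpace β] [DiscreteMeasurableSpace β]
    [Fintype γ] [Nonempty γ] [MeasurableSpace γ] [DiscreteMeasurableSpace γ]
    (μ : Measure Ω) [IsProbabilityMeasure μ]
    (Y : Ω → γ) (H : Ω → α) (S : Ω → β)
    (hY : Measurable Y) (hH : Measurable H) (hS : Measurable S) :
    1 - ∑ p : α × β, ⨆ y : γ,
        (μ (H ⁻¹' {p.1} ∩ S ⁻¹' {p.2} ∩ Y ⁻¹' {y})).toReal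
      ≤ (1 / 2) * min (condEnt2 μ Y H) (condEnt2 μ Y S) := by
  rw [mul_min_of_nonneg _ _ (by norm_num : (0:ℝ) ≤ 1 / 2)]
  refine le_min ?_ ?_
  · have h1 := aux_single μ Y H hY hH
    have h2 := aux_pair μ Y H S hS
    rw [Fintype.sum_prod_type]
    linarith
  · have h1 := aux_single μ Y S hY hS
    have h2 := aux_pair μ Y S H hH
    rw [Fintype.sum_prod_type_right]
    simp only [Set.inter_comm (S ⁻¹' _) (H ⁻¹' _)] at h2
    linarith
end

section
/- Let z₁, …, zₙ : Ω → ℝᵈ be random vectors on a probability space (Ω, μ) such that for every i each product of coordinates of zᵢ is integrable and the second-moment matrix of each zᵢ equals a common positive definite matrix Σ, and let γ ≥ 0. Then the (expected) Rademacher complexity of the constrained linear class F_γ = {z ↦ θᵀz : θᵀΣθ ≤ γ} satisfies E_z[(1/2ⁿ) ∑_{ε ∈ {−1,1}ⁿ} sup {(1/n) ∑_{i=1}^{n} εᵢ (θᵀ zᵢ(ω)) : θ ∈ ℝᵈ, θᵀ Σ θ ≤ γ}] ≤ √(γ · d / n). -/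
open MeasureTheory Matrix


lemma rad_orth {n : ℕ} (i j : Fin n) :
    ∑ ε : Fin n → Bool, (if ε i then (1 : ℝ) else -1) * (if ε j then (1 : ℝ) else -1)
      = if i = j then 2 ^ n else 0 := by
  split_ifs with h
  · subst h
    have : ∀ ε : Fin n → Bool,
        (if ε i then (1 : ℝ) else -1) * (if ε i then (1 : ℝ) else -1) = 1 := by
      intro ε; split_ifs <;> norm_num
    simp [this]
  · have hinv : Function.Involutive (fun ε : Fin n → Bool => Function.update ε i (!(ε i))) := by
      intro ε; simp
    have := Equiv.sum_comp (Function.Involutive.toPerm _ hinv)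
      (fun ε : Fin n → Bool => (if ε i then (1 : ℝ) else -1) * (if ε j then (1 : ℝ) else -1))
    have h2 : ∀ ε : Fin n → Bool,
        (if (Function.Involutive.toPerm _ hinv ε) i then (1 : ℝ) else -1)
          * (if (Function.Involutive.toPerm _ hinv ε) j then (1 : ℝ) else -1)
        = - ((if ε i then (1 : ℝ) else -1) * (if ε j then (1 : ℝ) else -1)) := by
      intro ε
      have e1 : (Function.Involutive.toPerm _ hinv ε) i = !(ε i) := by
        simp [Function.Involutive.toPerm]
      have e2 : (Function.Involutive.toPerm _ hinv ε) j = ε j := by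
        simp [Function.Involutive.toPerm, Function.update_of_ne (Ne.symm h)]
      rw [e1, e2]
      cases ε i <;> cases ε j <;> simp
    simp only [h2, Finset.sum_neg_distrib] at this
    linarith

lemma amgm_opt {L a b : ℝ} (ha : 0 ≤ a) (hb : 0 ≤ b)
    (h : ∀ c > 0, L ≤ (a / c + c * b) / 2) : L ≤ Real.sqrt (a * b) := by
  have key : ∀ e > 0, L ≤ Real.sqrt ((a + e) * (b + e)) := by
    intro e he
    have hx : 0 < Real.sqrt (a + e) := Real.sqrt_pos.2 (by linarith)
    have hy : 0 < Real.sqrt (b + e) := Real.sqrt_pos.2 (by linarith)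
    have hx2 : Real.sqrt (a + e) * Real.sqrt (a + e) = a + e :=
      Real.mul_self_sqrt (by linarith)
    have hy2 : Real.sqrt (b + e) * Real.sqrt (b + e) = b + e :=
      Real.mul_self_sqrt (by linarith)
    have h1 := h (Real.sqrt (a + e) / Real.sqrt (b + e)) (by positivity)
    rw [Real.sqrt_mul (by linarith)]
    have h2 : a / (Real.sqrt (a + e) / Real.sqrt (b + e))
        ≤ Real.sqrt (a + e) * Real.sqrt (b + e) := by
      rw [div_le_iff₀ (by positivity)]
      have : Real.sqrt (a + e) * Real.sqrt (b + e) * (Real.sqrt (a + e) / Real.sqrt (b + e))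
        = Real.sqrt (a + e) * Real.sqrt (a + e) := by field_simp
      rw [this, hx2]; linarith
    have h3 : (Real.sqrt (a + e) / Real.sqrt (b + e)) * b
        ≤ Real.sqrt (a + e) * Real.sqrt (b + e) := by
      rw [div_mul_eq_mul_div, div_le_iff₀ hy, mul_assoc, hy2]
      exact mul_le_mul_of_nonneg_left (by linarith) hx.le
    linarith
  have hc : Filter.Tendsto (fun e : ℝ => Real.sqrt ((a + e) * (b + e)))
      (nhdsWithin 0 (Set.Ioi 0)) (nhds (Real.sqrt (a * b))) := by
    have : Continuous (fun e : ℝ => Real.sqrt ((a + e) * (b + e))) := by fun_prop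
    have h0 := this.tendsto 0
    simp only [add_zero] at h0
    exact h0.mono_left nhdsWithin_le_nhds
  exact ge_of_tendsto hc (Filter.eventually_of_mem self_mem_nhdsWithin key)

lemma young_quad {d : ℕ} {M : Matrix (Fin d) (Fin d) ℝ} (hM : M.PosDef)
    (θ v : Fin d → ℝ) {c : ℝ} (hc : 0 < c) :
    θ ⬝ᵥ v ≤ (θ ⬝ᵥ (M *ᵥ θ) / c + c * (v ⬝ᵥ (M⁻¹ *ᵥ v))) / 2 := by
  have hdet : IsUnit M.det := hM.det_pos.ne'.isUnit
  have hT : Mᵀ = M := by simpa using hM.isHermitian.eq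
  have h := hM.posSemidef.dotProduct_mulVec_nonneg (θ - c • (M⁻¹ *ᵥ v))
  have e1 : M *ᵥ (M⁻¹ *ᵥ v) = v := by
    rw [Matrix.mulVec_mulVec, Matrix.mul_nonsing_inv _ hdet, Matrix.one_mulVec]
  have e2 : (M⁻¹ *ᵥ v) ⬝ᵥ (M *ᵥ θ) = θ ⬝ᵥ v := by
    rw [Matrix.dotProduct_mulVec, ← Matrix.mulVec_transpose, hT, e1, dotProduct_comm]
  simp only [star_trivial, Matrix.mulVec_sub, Matrix.mulVec_smul, e1, sub_dotProduct,
    dotProduct_sub, smul_dotProduct, dotProduct_smul, e2, smul_eq_mul] at h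
  rw [dotProduct_comm (M⁻¹ *ᵥ v) v] at h
  have : (θ ⬝ᵥ (M *ᵥ θ) / c + c * (v ⬝ᵥ (M⁻¹ *ᵥ v))) / 2 - θ ⬝ᵥ v
     = (θ ⬝ᵥ M *ᵥ θ - c * θ ⬝ᵥ v - (c * θ ⬝ᵥ v - c * (c * v ⬝ᵥ M⁻¹ *ᵥ v))) / (2 * c) := by
    field_simp; ring
  have h3 : 0 ≤ (θ ⬝ᵥ M *ᵥ θ - c * θ ⬝ᵥ v - (c * θ ⬝ᵥ v - c * (c * v ⬝ᵥ M⁻¹ *ᵥ v))) / (2 * c) :=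
    div_nonneg (by linarith) (by positivity)
  linarith

lemma rad_avg {n d : ℕ} (A : Matrix (Fin d) (Fin d) ℝ) (x : Fin n → Fin d → ℝ) :
    ∑ ε : Fin n → Bool, ((∑ i, (if ε i then (1 : ℝ) else -1) • x i) ⬝ᵥ
      (A *ᵥ (∑ i, (if ε i then (1 : ℝ) else -1) • x i)))
      = 2 ^ n * ∑ i, ∑ l, ∑ s, A l s * (x i l * x i s) := by
  have h1 : ∀ i, ∑ l, ∑ s, A l s * (x i l * x i s) = x i ⬝ᵥ (A *ᵥ x i) := by
    intro i
    simp only [dotProduct, mulVec, Finset.mul_sum]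
    refine Finset.sum_congr rfl fun l _ => Finset.sum_congr rfl fun s _ => by ring
  simp only [h1]
  have h2 : ∀ ε : Fin n → Bool, ((∑ i, (if ε i then (1 : ℝ) else -1) • x i) ⬝ᵥ
      (A *ᵥ (∑ i, (if ε i then (1 : ℝ) else -1) • x i)))
      = ∑ i, ∑ j, ((if ε i then (1 : ℝ) else -1) * (if ε j then (1 : ℝ) else -1))
        * (x i ⬝ᵥ (A *ᵥ x j)) := by
    intro ε
    rw [Matrix.mulVec_sum, sum_dotProduct]
    refine Finset.sum_congr rfl fun i _ => ?_
    rw [dotProduct_sum]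
    refine Finset.sum_congr rfl fun j _ => ?_
    rw [Matrix.mulVec_smul, smul_dotProduct, dotProduct_smul, smul_eq_mul, smul_eq_mul]
    ring
  simp only [h2]
  rw [Finset.sum_comm, Finset.mul_sum]
  refine Finset.sum_congr rfl fun i _ => ?_
  rw [Finset.sum_comm]
  simp only [← Finset.sum_mul, rad_orth]
  simp

/-- Rademacher complexity bound `R(F_γ) ≤ √(γ · d / n)` for the constrained linear class
`F_γ = {z ↦ θᵀz : θᵀ M θ ≤ γ}`, where `M` is the common (positive definite)
second-moment matrix of the sample vectors `zᵢ` (so `rank M = d`).  Sign vectors are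
encoded by `ε : Fin n → Bool`, with `true ↦ 1` and `false ↦ -1`. -/
theorem rademacher_complexity_bound {Ω : Type*} [MeasurableSpace Ω]
    (μ : Measure Ω) [IsProbabilityMeasure μ] {n d : ℕ}
    (z : Fin n → Ω → Fin d → ℝ)
    (hmeas : ∀ i, Measurable (z i))
    (hInt : ∀ (i : Fin n) (l s : Fin d), Integrable (fun ω => z i ω l * z i ω s) μ)
    (M : Matrix (Fin d) (Fin d) ℝ)
    (hMdef : ∀ (i : Fin n) (l s : Fin d), M l s = ∫ ω, z i ω l * z i ω s ∂μ)
    (hM : M.PosDef) (γ : ℝ) (hγ : 0 ≤ γ) :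
    ∫ ω, (1 / 2 ^ n : ℝ) * ∑ ε : Fin n → Bool,
        (⨆ θ : {θ : Fin d → ℝ // θ ⬝ᵥ (M *ᵥ θ) ≤ γ},
          (1 / n : ℝ) * ∑ i, (if ε i then (1 : ℝ) else -1) * ((θ : Fin d → ℝ) ⬝ᵥ z i ω)) ∂μ
      ≤ Real.sqrt (γ * d / n) := by
  have hlin : ∀ (θ : Fin d → ℝ) (ε : Fin n → Bool) (ω : Ω),
      (1 / n : ℝ) * ∑ i, (if ε i then (1 : ℝ) else -1) * (θ ⬝ᵥ z i ω)
        = θ ⬝ᵥ ((1 / n : ℝ) • ∑ i, (if ε i then (1 : ℝ) else -1) • z i ω) := by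
    intro θ ε ω
    rw [dotProduct_smul, dotProduct_sum, smul_eq_mul]
    simp only [dotProduct_smul, smul_eq_mul]
  have hb : ∀ c > 0, ∀ (ε : Fin n → Bool) (ω : Ω),
      ∀ θ : {θ : Fin d → ℝ // θ ⬝ᵥ (M *ᵥ θ) ≤ γ},
      (1 / n : ℝ) * ∑ i, (if ε i then (1 : ℝ) else -1) * ((θ : Fin d → ℝ) ⬝ᵥ z i ω)
      ≤ (γ / c + c * ((1 / n : ℝ) ^ 2 * ((∑ i, (if ε i then (1 : ℝ) else -1) • z i ω) ⬝ᵥ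
        (M⁻¹ *ᵥ (∑ i, (if ε i then (1 : ℝ) else -1) • z i ω))))) / 2 := by
    intro c hc ε ω θ
    rw [hlin]
    refine (young_quad hM _ _ hc).trans ?_
    have h1 : (θ : Fin d → ℝ) ⬝ᵥ (M *ᵥ θ) / c ≤ γ / c :=
      div_le_div_of_nonneg_right θ.2 hc.le
    simp only [Matrix.mulVec_smul, smul_dotProduct, dotProduct_smul, smul_eq_mul]
    rw [← mul_assoc (1 / n : ℝ) (1 / n : ℝ), ← sq]
    linarith
  have zmem : (0 : Fin d → ℝ) ⬝ᵥ (M *ᵥ 0) ≤ γ := by simpa using hγ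
  have : Nonempty {θ : Fin d → ℝ // θ ⬝ᵥ (M *ᵥ θ) ≤ γ} := ⟨⟨0, zmem⟩⟩
  have hmain : ∀ c > 0, ∫ ω, (1 / 2 ^ n : ℝ) * ∑ ε : Fin n → Bool,
        (⨆ θ : {θ : Fin d → ℝ // θ ⬝ᵥ (M *ᵥ θ) ≤ γ},
          (1 / n : ℝ) * ∑ i, (if ε i then (1 : ℝ) else -1) * ((θ : Fin d → ℝ) ⬝ᵥ z i ω)) ∂μ
      ≤ (γ / c + c * (d / n)) / 2 := by
    intro c hc
    have hI3 : ∀ i l s, Integrable (fun ω => M⁻¹ l s * (z i ω l * z i ω s)) μ :=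
      fun i l s => (hInt i l s).const_mul _
    have hI2 : ∀ i l, Integrable (fun ω => ∑ s, M⁻¹ l s * (z i ω l * z i ω s)) μ :=
      fun i l => integrable_finsetSum _ fun s _ => hI3 i l s
    have hI1 : ∀ i, Integrable (fun ω => ∑ l, ∑ s, M⁻¹ l s * (z i ω l * z i ω s)) μ :=
      fun i => integrable_finsetSum _ fun l _ => hI2 i l
    have hI : Integrable (fun ω => ∑ i, ∑ l, ∑ s, M⁻¹ l s * (z i ω l * z i ω s)) μ :=
      integrable_finsetSum _ fun i _ => integrable_finsetSum _ fun l _ =>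
        integrable_finsetSum _ fun s _ => (hInt i l s).const_mul _
    have hIv : ∫ ω, ∑ i, ∑ l, ∑ s, M⁻¹ l s * (z i ω l * z i ω s) ∂μ = n * d := by
      rw [integral_finsetSum _ fun i _ => hI1 i]
      have : ∀ i, ∫ ω, ∑ l, ∑ s, M⁻¹ l s * (z i ω l * z i ω s) ∂μ = d := by
        intro i
        rw [integral_finsetSum _ fun l _ => hI2 i l]
        have h1 : ∀ l, ∫ ω, ∑ s, M⁻¹ l s * (z i ω l * z i ω s) ∂μ = (M⁻¹ * M) l l := by
          intro l
          rw [integral_finsetSum _ fun s _ => hI3 i l s, Matrix.mul_apply]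
          refine Finset.sum_congr rfl fun s _ => ?_
          rw [integral_const_mul, ← hMdef]
          congr 1
          simpa using hM.isHermitian.apply s l
        simp only [h1]
        rw [Matrix.nonsing_inv_mul _ hM.det_pos.ne'.isUnit]
        simp
      simp [this]
    have hg : Integrable (fun ω => (γ / c + c * ((1 / n : ℝ) ^ 2 *
        ∑ i, ∑ l, ∑ s, M⁻¹ l s * (z i ω l * z i ω s))) / 2) μ :=
      ((integrable_const _).add ((hI.const_mul _).const_mul _)).div_const _
    calc _ ≤ ∫ ω, (γ / c + c * ((1 / n : ℝ) ^ 2 *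
        ∑ i, ∑ l, ∑ s, M⁻¹ l s * (z i ω l * z i ω s))) / 2 ∂μ := by
          refine integral_mono_of_nonneg (Filter.Eventually.of_forall fun ω => ?_) hg
            (Filter.Eventually.of_forall fun ω => ?_)
          · refine mul_nonneg (by positivity) (Finset.sum_nonneg fun ε _ => ?_)
            refine le_ciSup_of_le ⟨_, Set.forall_mem_range.2 (hb c hc ε ω)⟩ ⟨0, zmem⟩ ?_
            simp
          · have := Finset.sum_le_sum fun (ε : Fin n → Bool) (_ : ε ∈ Finset.univ) =>
              ciSup_le (hb c hc ε ω)
            refine (mul_le_mul_of_nonneg_left this (by positivity)).trans_eq ?_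
            rw [← Finset.sum_div, Finset.sum_add_distrib, ← Finset.mul_sum, ← Finset.mul_sum,
              rad_avg]
            simp only [Finset.sum_const, Finset.card_univ, Fintype.card_fun, Fintype.card_bool,
              Fintype.card_fin, nsmul_eq_mul, Nat.cast_pow, Nat.cast_ofNat]
            generalize ∑ i, ∑ l, ∑ s, M⁻¹ l s * (z i ω l * z i ω s) = T
            generalize (1 / n : ℝ) = t
            have : (2 : ℝ) ^ n ≠ 0 := by positivity
            field_simp
      _ = (γ / c + c * (d / n)) / 2 := by
          rw [integral_div, integral_add (integrable_const _) ((hI.const_mul _).const_mul _),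
            integral_const_mul, integral_const_mul, hIv]
          simp only [integral_const, probReal_univ, one_smul]
          rcases Nat.eq_zero_or_pos n with h | h
          · subst h; simp
          · have : (n : ℝ) ≠ 0 := by positivity
            field_simp
  rw [mul_div_assoc]
  exact amgm_opt hγ (by positivity) hmain
end
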